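/- Let H n denote the number of head normal forms of size n. Then the sequence n ↦ H n · ρ^n · n^{3/2} converges to C_H = C · ρ/(1 − ρ) ≈ 0.2546259 as n → ∞; that is, H n ∼ (1/ρ)^n · C_H / n^{3/2}. -/

import Mathlib

/-- Lambda terms with de Bruijn indices. -/
inductive Term : Type
  | var : ℕ → Term
  | app : Term → Term → Term
  | abs : Term → Term

namespace Term

/-- Natural size: every operator (zero, successor, application, abstraction) has size 1. -/
def size : Term → ℕ
  | var k => k + 1
  | app M N => M.size + N.size + 1
  | abs M => M.size + 1

end Term

/-- `L n` is the number of lambda terms of size `n`. -/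
noncomputable def L (n : ℕ) : ℕ := Nat.card {t : Term // t.size = n}


/-- Neutral head normal forms: terms of the form `app (app … (app (var k) N₁) …) N_p`
with `p ≥ 0` and arbitrary terms `N₁, …, N_p`. -/
inductive IsNeutralHnf : Term → Prop
  | var (k : ℕ) : IsNeutralHnf (Term.var k)
  | app {m : Term} (n : Term) : IsNeutralHnf m → IsNeutralHnf (Term.app m n)

/-- `K n` is the number of neutral head normal forms of size `n`. -/
noncomputable def K (n : ℕ) : ℕ := Nat.card {t : Term // IsNeutralHnf t ∧ t.size = n}

/-- Head normal forms: terms of the form `abs (abs … (abs K) …)` (zero or more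
abstractions) where `K` is a neutral head normal form. -/
inductive IsHnf : Term → Prop
  | of_neutral {t : Term} : IsNeutralHnf t → IsHnf t
  | abs {t : Term} : IsHnf t → IsHnf (Term.abs t)

/-- `H n` is the number of head normal forms of size `n`. -/
noncomputable def H (n : ℕ) : ℕ := Nat.card {t : Term // IsHnf t ∧ t.size = n}

def szEquiv (n : ℕ) : {t : Term // t.size = n+1} ≃
   Unit ⊕ ((Σ p : Finset.HasAntidiagonal.antidiagonal n, {t : Term // t.size = p.1.1} × {t : Term // t.size = p.1.2}) ⊕ {t : Term // t.size = n}) where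
  toFun := fun t => match t with
    | ⟨Term.var _, _⟩ => Sum.inl ()
    | ⟨Term.app a b, h⟩ => Sum.inr (Sum.inl ⟨⟨(a.size, b.size), by simp [Term.size] at h; simp [h]⟩, ⟨a, rfl⟩, ⟨b, rfl⟩⟩)
    | ⟨Term.abs a, h⟩ => Sum.inr (Sum.inr ⟨a, by simpa [Term.size] using h⟩)
  invFun := fun s => match s with
    | Sum.inl _ => ⟨Term.var n, rfl⟩
    | Sum.inr (Sum.inl ⟨p, a, b⟩) => ⟨Term.app a.1 b.1, by
        have := Finset.HasAntidiagonal.mem_antidiagonal.1 p.2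
        simp [Term.size, a.2, b.2, this]⟩
    | Sum.inr (Sum.inr a) => ⟨Term.abs a.1, by simp [Term.size, a.2]⟩
  left_inv := by
    rintro ⟨t, h⟩
    cases t with
    | var k =>
      simp only [Term.size] at h
      have : k = n := by omega
      subst this; rfl
    | app a b => rfl
    | abs a => rfl
  right_inv := by
    rintro (_ | ⟨⟨⟨i, j⟩, hp⟩, ⟨a, ha⟩, ⟨b, hb⟩⟩ | a)
    · rfl
    · simp only at ha hb
      subst ha hb
      rfl
    · rfl

theorem isN_app {a b : Term} : IsNeutralHnf (Term.app a b) ↔ IsNeutralHnf a :=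
  ⟨fun h => by cases h; assumption, fun h => .app b h⟩

theorem isN_abs {a : Term} : ¬ IsNeutralHnf (Term.abs a) := fun h => by cases h

theorem isH_abs {a : Term} : IsHnf (Term.abs a) ↔ IsHnf a :=
  ⟨fun h => by
    cases h with
    | of_neutral h => exact absurd h isN_abs
    | abs h => exact h, .abs⟩

theorem isH_var {k : ℕ} : IsHnf (Term.var k) ↔ IsNeutralHnf (Term.var k) :=
  ⟨fun _ => .var k, .of_neutral⟩

theorem isH_app {a b : Term} : IsHnf (Term.app a b) ↔ IsNeutralHnf (Term.app a b) :=
  ⟨fun h => by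
    cases h with
    | of_neutral h => exact h, .of_neutral⟩

def kEquiv (n : ℕ) : {t : Term // IsNeutralHnf t ∧ t.size = n+1} ≃
   Unit ⊕ (Σ p : Finset.HasAntidiagonal.antidiagonal n, {t : Term // IsNeutralHnf t ∧ t.size = p.1.1} × {t : Term // t.size = p.1.2}) where
  toFun := fun t => match t with
    | ⟨Term.var _, _⟩ => Sum.inl ()
    | ⟨Term.app a b, h⟩ => (Sum.inr ⟨⟨(a.size, b.size), by simp [Term.size] at h; simp [h]⟩, ⟨a, isN_app.1 h.1, rfl⟩, ⟨b, rfl⟩⟩)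
    | ⟨Term.abs a, h⟩ => absurd h.1 isN_abs
  invFun := fun s => match s with
    | Sum.inl _ => ⟨Term.var n, .var n, rfl⟩
    | (Sum.inr ⟨p, a, b⟩) => ⟨Term.app a.1 b.1, .app _ a.2.1, by
        have := Finset.HasAntidiagonal.mem_antidiagonal.1 p.2
        simp [Term.size, a.2, b.2, this]⟩
  left_inv := by
    rintro ⟨t, h⟩
    cases t with
    | var k => replace h := h.2; simp only [Term.size] at h; simp; omega
    | app a b => rfl
    | abs a => exact absurd h.1 isN_abs
  right_inv := by
    rintro (_ | ⟨⟨⟨i, j⟩, hp⟩, ⟨a, hn, ha⟩, ⟨b, hb⟩⟩)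
    · rfl
    · simp only at ha hb
      subst ha hb
      rfl

def hEquiv (n : ℕ) : {t : Term // IsHnf t ∧ t.size = n+1} ≃
   {t : Term // IsNeutralHnf t ∧ t.size = n+1} ⊕ {t : Term // IsHnf t ∧ t.size = n} where
  toFun := fun t => match t with
    | ⟨Term.var k, h⟩ => Sum.inl ⟨Term.var k, isH_var.1 h.1, h.2⟩
    | ⟨Term.app a b, h⟩ => Sum.inl ⟨Term.app a b, isH_app.1 h.1, h.2⟩
    | ⟨Term.abs a, h⟩ => Sum.inr ⟨a, isH_abs.1 h.1, by simpa [Term.size] using h.2⟩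
  invFun := fun s => match s with
    | Sum.inl a => ⟨a.1, .of_neutral a.2.1, a.2.2⟩
    | Sum.inr a => ⟨Term.abs a.1, .abs a.2.1, by simp [Term.size, a.2]⟩
  left_inv := by
    rintro ⟨t, h⟩
    cases t <;> rfl
  right_inv := by
    rintro (⟨t, h⟩ | a)
    · cases t with
      | var k => rfl
      | app a b => rfl
      | abs a => exact absurd h.1 isN_abs
    · rfl

theorem size_pos (t : Term) : 0 < t.size := by cases t <;> simp [Term.size]

instance finSz (n : ℕ) : Finite {t : Term // t.size = n} := by
  induction n using Nat.strong_induction_on with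
  | _ n ih =>
    cases n with
    | zero =>
      have : IsEmpty {t : Term // t.size = 0} := ⟨fun t => (size_pos t.1).ne' t.2⟩
      infer_instance
    | succ n =>
      have := ih n (by omega)
      have h1 : ∀ p : Finset.HasAntidiagonal.antidiagonal n, Finite ({t : Term // t.size = p.1.1} × {t : Term // t.size = p.1.2}) := by
        intro p
        have hp := Finset.HasAntidiagonal.mem_antidiagonal.1 p.2
        have := ih p.1.1 (by omega)
        have := ih p.1.2 (by omega)
        infer_instance
      exact Finite.of_equiv _ (szEquiv n).symm

instance finP (P : Term → Prop) (n : ℕ) : Finite {t : Term // P t ∧ t.size = n} :=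
  Finite.of_injective (β := {t : Term // t.size = n}) (fun t => ⟨t.1, t.2.2⟩) (fun a b h => by
    apply Subtype.ext; simpa using h)

theorem P_zero (P : Term → Prop) : Nat.card {t : Term // P t ∧ t.size = 0} = 0 := by
  have : IsEmpty {t : Term // P t ∧ t.size = 0} := ⟨fun t => (size_pos t.1).ne' t.2.2⟩
  simp

theorem L_zero : L 0 = 0 := by
  have : IsEmpty {t : Term // t.size = 0} := ⟨fun t => (size_pos t.1).ne' t.2⟩
  simp [L]

theorem card_sigma_anti (n : ℕ) (α : ℕ → Type) (β : ℕ → Type) [∀ i, Finite (α i)] [∀ i, Finite (β i)] :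
    Nat.card (Σ p : Finset.HasAntidiagonal.antidiagonal n, α p.1.1 × β p.1.2) =
     ∑ p ∈ Finset.HasAntidiagonal.antidiagonal n, Nat.card (α p.1) * Nat.card (β p.2) := by
  rw [Nat.card_sigma]
  simp only [Nat.card_prod]
  exact Finset.sum_coe_sort (Finset.HasAntidiagonal.antidiagonal n) (fun p => Nat.card (α p.1) * Nat.card (β p.2))

theorem L_succ (n : ℕ) : L (n+1) = 1 + ∑ p ∈ Finset.HasAntidiagonal.antidiagonal n, L p.1 * L p.2 + L n := by
  unfold L
  rw [Nat.card_congr (szEquiv n), Nat.card_sum, Nat.card_sum,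
    card_sigma_anti n (fun i => {t : Term // t.size = i}) (fun i => {t : Term // t.size = i})]
  simp [add_assoc]

theorem K_succ (n : ℕ) : K (n+1) = 1 + ∑ p ∈ Finset.HasAntidiagonal.antidiagonal n, K p.1 * L p.2 := by
  unfold L K
  rw [Nat.card_congr (kEquiv n), Nat.card_sum,
    card_sigma_anti n (fun i => {t : Term // IsNeutralHnf t ∧ t.size = i}) (fun i => {t : Term // t.size = i})]
  simp

theorem H_succ (n : ℕ) : H (n+1) = K (n+1) + H n := by
  unfold H K
  rw [Nat.card_congr (hEquiv n), Nat.card_sum]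

open PowerSeries in
theorem H_ps : (1 - (X : ℂ⟦X⟧)) * (1 + X - 2 * (1 - X) * mk (fun n => (H n : ℂ))) ^ 2
    = 1 - 3 * X - X ^ 2 - X ^ 3 := by
  set h : ℂ⟦X⟧ := mk (fun n => (H n : ℂ)) with hh
  set k : ℂ⟦X⟧ := mk (fun n => (K n : ℂ)) with hk
  set l : ℂ⟦X⟧ := mk (fun n => (L n : ℂ)) with hl
  set u : ℂ⟦X⟧ := mk (fun n => (1 : ℂ)) with hu
  have eu : u * (1 - X) = 1 := mk_one_mul_one_sub_eq_one ℂ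
  have e1 : l = X * (u + l * l + l) := by
    ext n
    cases n with
    | zero => simp [hl, L_zero]
    | succ n =>
      rw [coeff_succ_X_mul]
      simp [hl, hu, coeff_mul, L_succ]
  have e2 : k = X * (u + k * l) := by
    ext n
    cases n with
    | zero => simp [hk, K, P_zero]
    | succ n =>
      rw [coeff_succ_X_mul]
      simp [hl, hu, hk, coeff_mul, K_succ]
  have e3 : h = k + X * h := by
    ext n
    cases n with
    | zero => simp [hk, hh, K, H, P_zero]
    | succ n =>
      rw [map_add, coeff_succ_X_mul]
      simp [hk, hh, H_succ]
  have e4 : (k - X * l - X) * (1 - X * l) = 0 := by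
    linear_combination e2 - X * e1 + X * eu
  have n0 : (1 - X * l : ℂ⟦X⟧) ≠ 0 := by
    intro h0
    have := congrArg (constantCoeff (R := ℂ)) h0
    simp at this
  have e5 : k = X * l + X := by
    have := (mul_eq_zero.1 e4).resolve_right n0
    linear_combination this
  have e6 : (1 - X) * h = k := by linear_combination e3
  have e8 : 1 + X - 2 * (1 - X) * h = 1 - X - 2 * X * l := by
    linear_combination (-2 : ℂ⟦X⟧) * e6 - 2 * e5
  rw [e8]
  linear_combination (1 - X) * (-4 * X) * e1 - 4 * X ^ 2 * eu
open PowerSeries Filter Topology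

theorem ratio_tendsto (k : ℝ) : Tendsto (fun n : ℕ => ((n : ℝ) + k) / n) atTop (𝓝 1) := by
  have h := (tendsto_const_div_atTop_nhds_zero_nat k).const_add 1
  rw [add_zero] at h
  refine h.congr' ?_
  filter_upwards [eventually_gt_atTop 0] with n hn
  have hn' : (n : ℝ) ≠ 0 := by exact_mod_cast hn.ne'
  field_simp

/-- weighted absolute summability -/
def WS (f : ℂ⟦X⟧) : Prop := Summable (fun n : ℕ => ‖coeff n f‖ * ((n : ℝ) + 1) ^ 2)

theorem WS.mul {f g : ℂ⟦X⟧} (hf : WS f) (hg : WS g) : WS (f * g) := by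
  have hf' : Summable (fun n : ℕ => ‖(‖coeff n f‖ * ((n : ℝ) + 1) ^ 2)‖) := by
    simpa [WS] using hf.norm
  have hg' : Summable (fun n : ℕ => ‖(‖coeff n g‖ * ((n : ℝ) + 1) ^ 2)‖) := by
    simpa [WS] using hg.norm
  have := summable_norm_sum_mul_antidiagonal_of_summable_norm hf' hg'
  refine Summable.of_nonneg_of_le (fun n => by positivity) (fun n => ?_) this
  rw [Real.norm_of_nonneg (Finset.sum_nonneg fun p _ => by positivity), coeff_mul]
  refine (mul_le_mul_of_nonneg_right (norm_sum_le _ _) (by positivity)).trans ?_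
  rw [Finset.sum_mul]
  refine Finset.sum_le_sum fun p hp => ?_
  have hp' : (n : ℝ) = p.1 + p.2 := by exact_mod_cast (Finset.HasAntidiagonal.mem_antidiagonal.1 hp).symm
  rw [norm_mul]
  have h1 : ((n : ℝ) + 1) ^ 2 ≤ (((p.1 : ℝ) + 1) * ((p.2 : ℝ) + 1)) ^ 2 := by
    gcongr
    rw [hp']
    nlinarith [mul_nonneg (Nat.cast_nonneg (α := ℝ) p.1) (Nat.cast_nonneg (α := ℝ) p.2)]
  calc _ ≤ ‖coeff p.1 f‖ * ‖coeff p.2 g‖ * (((p.1 : ℝ) + 1) * ((p.2 : ℝ) + 1)) ^ 2 := by gcongr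
    _ = _ := by ring

theorem WS.summable {f : ℂ⟦X⟧} (hf : WS f) : Summable (fun n => ‖coeff n f‖) := by
  refine Summable.of_nonneg_of_le (fun n => by positivity) (fun n => ?_) hf
  have : (1 : ℝ) ≤ ((n : ℝ) + 1) ^ 2 := one_le_pow₀ (by linarith [Nat.cast_nonneg (α := ℝ) n])
  nlinarith [norm_nonneg (coeff n f)]

/-- value at one -/
noncomputable def ev (f : ℂ⟦X⟧) : ℂ := ∑' n, coeff n f

theorem ev_mul {f g : ℂ⟦X⟧} (hf : WS f) (hg : WS g) : ev (f * g) = ev f * ev g := by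
  unfold ev
  rw [tsum_mul_tsum_eq_tsum_sum_antidiagonal_of_summable_norm hf.summable hg.summable]
  simp [coeff_mul]

theorem choose_succ_rec (r : ℝ) (n : ℕ) :
    Ring.choose r (n+1) = Ring.choose r n * ((r - n) / (n + 1)) := by
  rw [Ring.choose_eq_smul, Ring.choose_eq_smul, ← Polynomial.aeval_eq_smeval,
    ← Polynomial.aeval_eq_smeval, descPochhammer_succ_right, Nat.factorial_succ]
  have := Nat.factorial_ne_zero n
  have h2 : (n : ℝ) + 1 ≠ 0 := by positivity
  simp
  field_simp

theorem choose_bound {r : ℝ} (hr : |r| ≤ 2) (n : ℕ) : |Ring.choose r n| ≤ n + 1 := by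
  induction n with
  | zero => simp
  | succ n ih =>
    rw [choose_succ_rec, abs_mul, abs_div, abs_of_pos (show (0:ℝ) < (n:ℝ)+1 by positivity)]
    have : |r - n| ≤ n + 2 := by
      have := abs_sub r (n : ℝ)
      have h3 : |(n : ℝ)| = n := abs_of_nonneg (by positivity)
      linarith
    calc _ ≤ ((n : ℝ) + 1) * ((n + 2) / (n + 1)) := by gcongr
      _ = _ := by push_cast; field_simp; ring

/-- (1 - a X)^r -/
noncomputable def bs (r : ℝ) (a : ℂ) : ℂ⟦X⟧ := rescale (-a) (binomialSeries ℂ r)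

theorem coeff_bs (r : ℝ) (a : ℂ) (n : ℕ) : coeff n (bs r a) = (-a) ^ n * (Ring.choose r n : ℝ) := by
  simp [bs, coeff_rescale]

theorem bs_ws {r : ℝ} (hr : |r| ≤ 2) {a : ℂ} (ha : ‖a‖ < 1) : WS (bs r a) := by
  have h1 : Summable (fun n : ℕ => ((n : ℝ) + 1) ^ 3 * ‖a‖ ^ n) := by
    have h := fun k => summable_pow_mul_geometric_of_norm_lt_one (R := ℝ) k (r := ‖a‖) (by simpa using ha)
    have := (((h 3).add ((h 2).mul_left 3)).add ((h 1).mul_left 3)).add (h 0)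
    refine this.congr fun n => by ring
  refine Summable.of_nonneg_of_le (fun n => by positivity) (fun n => ?_) h1
  rw [coeff_bs, norm_mul, norm_pow, norm_neg, Complex.norm_real, Real.norm_eq_abs]
  have := choose_bound hr n
  calc _ ≤ ‖a‖ ^ n * ((n : ℝ) + 1) * ((n : ℝ) + 1) ^ 2 := by gcongr
    _ = _ := by ring

theorem bs_add (r s : ℝ) (a : ℂ) : bs (r + s) a = bs r a * bs s a := by
  simp [bs, binomialSeries_add]

theorem bs_one (a : ℂ) : bs 1 a = 1 - C a * X := by
  have := binomialSeries_nat (R := ℝ) (A := ℂ) 1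
  simp only [Nat.cast_one, pow_one] at this
  simp [bs, this, rescale_X, sub_eq_add_neg]

theorem bs_half_sq (a : ℂ) : bs (1/2) a ^ 2 = 1 - C a * X := by
  rw [sq, ← bs_add, ← bs_one]; norm_num

theorem bs_inv (a : ℂ) : bs (-3/2) a ^ 2 * (1 - C a * X) ^ 3 = 1 := by
  rw [← bs_one, sq, pow_three, ← bs_add, ← bs_add, ← bs_add, ← bs_add]
  norm_num [bs]

theorem ev_lin (a : ℂ) : ev (1 - C a * X) = 1 - a := by
  unfold ev
  rw [tsum_eq_sum (s := Finset.range 2)]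
  · simp [coeff_X, coeff_one]
  · intro n hn
    simp at hn
    simp [coeff_X, coeff_one, show n ≠ 0 by omega, show n ≠ 1 by omega]

theorem ev_half_sq {a : ℂ} (ha : ‖a‖ < 1) : ev (bs (1/2) a) ^ 2 = 1 - a := by
  have h := bs_ws (r := 1/2) (by norm_num [abs_le]) ha
  rw [← ev_lin, ← bs_half_sq, sq, sq, ev_mul h h]

theorem ev_inv {a : ℂ} (ha : ‖a‖ < 1) : ev (bs (-3/2) a) ^ 2 * (1 - a) ^ 3 = 1 := by
  have h := bs_ws (r := -3/2) (by norm_num [abs_le]) ha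
  have h1 := bs_ws (r := 1) (by norm_num [abs_le]) ha
  rw [← ev_lin]
  have := congrArg ev (bs_inv a)
  rw [← bs_one] at this ⊢
  rw [sq, pow_three, ev_mul (h.mul h) (h1.mul (h1.mul h1)), ev_mul h h, ev_mul h1 (h1.mul h1), ev_mul h1 h1] at this
  rw [sq, pow_three, this]
  have := ev_lin 0
  simpa using this

/-- asymptotics of the coefficients of the square root -/
theorem half_asymp : Tendsto (fun n : ℕ => ((-1 : ℝ) ^ n * Ring.choose (1/2 : ℝ) n) * (n : ℝ) ^ ((3 : ℝ)/2))
    atTop (𝓝 (-1 / (2 * Real.sqrt Real.pi))) := by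
  have hG : Real.Gamma (-1/2) = -2 * Real.sqrt Real.pi := by
    have := Real.Gamma_add_one (s := -1/2) (by norm_num)
    norm_num [Real.Gamma_one_half_eq] at this
    rw [show (-1/2 : ℝ) = -(1/2) by norm_num]
    linarith
  have hpi : 0 < Real.sqrt Real.pi := Real.sqrt_pos.2 Real.pi_pos
  have key : ∀ n : ℕ, (-1 : ℝ) ^ (n+1) * Ring.choose (1/2 : ℝ) (n+1) * ((n+1).factorial : ℝ) =
      ∏ j ∈ Finset.range (n + 1), ((-1/2 : ℝ) + j) := by
    intro n
    induction n with
    | zero => norm_num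
    | succ n ih =>
      rw [Finset.prod_range_succ, ← ih, choose_succ_rec _ (n+1), Nat.factorial_succ (n+1)]
      push_cast
      have h2 : (n : ℝ) + 1 + 1 ≠ 0 := by positivity
      field_simp
      ring
  rw [← tendsto_add_atTop_iff_nat 1]
  have h1 := (Real.GammaSeq_tendsto_Gamma (-1/2)).inv₀ (by rw [hG]; nlinarith)
  have h2 : Tendsto (fun n : ℕ => (((n : ℝ) + 1) / n) ^ ((1 : ℝ)/2)) atTop (𝓝 1) := by
    have : Tendsto (fun n : ℕ => ((n : ℝ) + 1) / n) atTop (𝓝 1) := ratio_tendsto 1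
    simpa using this.rpow_const (p := (1 : ℝ)/2) (by norm_num)
  have h3 := h1.mul h2
  rw [hG] at h3
  have e : (-2 * Real.sqrt Real.pi)⁻¹ * 1 = -1 / (2 * Real.sqrt Real.pi) := by
    field_simp
  rw [e] at h3
  refine h3.congr' ?_
  filter_upwards [eventually_gt_atTop 0] with n hn
  have hn' : (0 : ℝ) < n := by exact_mod_cast hn
  have hf : (0 : ℝ) < n.factorial := by exact_mod_cast n.factorial_pos
  rw [Real.GammaSeq, ← key, Nat.factorial_succ, Real.div_rpow (by positivity) hn'.le,
    show (-1/2 : ℝ) = -(1/2) by norm_num, Real.rpow_neg hn'.le,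
    show (3/2 : ℝ) = 1 + 1/2 by norm_num, Real.rpow_add (by positivity), Real.rpow_one]
  have h4 : (0 : ℝ) < (n : ℝ) ^ ((1:ℝ)/2) := by positivity
  push_cast
  field_simp

theorem conv_asymp (s e : ℕ → ℂ) (c : ℂ)
    (hs : Tendsto (fun n : ℕ => s n * ((n : ℝ) ^ ((3 : ℝ)/2) : ℝ)) atTop (𝓝 c))
    (he : Summable (fun n : ℕ => ‖e n‖ * ((n : ℝ) + 1) ^ 2)) :
    Tendsto (fun n : ℕ => (∑ p ∈ Finset.HasAntidiagonal.antidiagonal n, e p.1 * s p.2) * ((n : ℝ) ^ ((3 : ℝ)/2) : ℝ)) atTop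
      (𝓝 ((∑' n, e n) * c)) := by
  obtain ⟨M, hM⟩ : ∃ M : ℝ, ∀ n : ℕ, ‖s n‖ * ((n : ℝ) + 1) ^ ((3 : ℝ)/2) ≤ M := by
    obtain ⟨M, hM⟩ := (Metric.isBounded_range_of_tendsto _ hs).exists_norm_le
    refine ⟨max (‖s 0‖) (M * 2 ^ ((3 : ℝ)/2)), fun n => ?_⟩
    rcases Nat.eq_zero_or_pos n with rfl | hn
    · simp
    · refine le_max_of_le_right ?_
      have h1 := hM _ ⟨n, rfl⟩
      simp only [norm_mul, Complex.norm_real] at h1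
      rw [Real.norm_of_nonneg (by positivity)] at h1
      have hn' : (1 : ℝ) ≤ n := by exact_mod_cast hn
      calc ‖s n‖ * ((n : ℝ) + 1) ^ ((3 : ℝ)/2) ≤ ‖s n‖ * ((n : ℝ) * 2) ^ ((3 : ℝ)/2) := by
            gcongr; linarith
        _ = ‖s n‖ * (n : ℝ) ^ ((3 : ℝ)/2) * 2 ^ ((3 : ℝ)/2) := by
            rw [Real.mul_rpow (by positivity) (by positivity)]; ring
        _ ≤ _ := by gcongr
  have hM0 : 0 ≤ M := le_trans (by positivity) (hM 0)
  have e1 : ∀ n : ℕ, (∑ p ∈ Finset.HasAntidiagonal.antidiagonal n, e p.1 * s p.2) * ((n : ℝ) ^ ((3 : ℝ)/2) : ℝ)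
      = ∑' k, (if k ≤ n then e k * s (n - k) * ((n : ℝ) ^ ((3 : ℝ)/2) : ℝ) else 0) := by
    intro n
    rw [tsum_eq_sum (s := Finset.range (n+1)), Finset.Nat.sum_antidiagonal_eq_sum_range_succ (fun i j => e i * s j),
      Finset.sum_mul]
    · refine Finset.sum_congr rfl fun k hk => ?_
      rw [if_pos (by simp at hk; omega)]
    · intro k hk
      rw [if_neg (by simp at hk; omega)]
  simp_rw [e1]
  rw [← tsum_mul_right]
  refine tendsto_tsum_of_dominated_convergence (bound := fun k => M * (‖e k‖ * ((k : ℝ) + 1) ^ 2)) (he.mul_left M) ?_ ?_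
  · intro k
    have h1 : Tendsto (fun n : ℕ => (((n : ℝ) + k) / n) ^ ((3 : ℝ)/2)) atTop (𝓝 1) := by
      have : Tendsto (fun n : ℕ => ((n : ℝ) + k) / n) atTop (𝓝 1) := ratio_tendsto k
      simpa using this.rpow_const (p := (3 : ℝ)/2) (by norm_num)
    rw [← tendsto_add_atTop_iff_nat k]
    have h2 : Tendsto (fun n : ℕ => (((((n : ℝ) + k) / n) ^ ((3 : ℝ)/2) : ℝ) : ℂ)) atTop (𝓝 1) := by
      have := (Complex.continuous_ofReal.tendsto 1).comp h1
      rw [Complex.ofReal_one] at this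
      exact this
    have h3 := ((hs.mul h2).const_mul (e k))
    rw [mul_one] at h3
    refine h3.congr' ?_
    filter_upwards [eventually_gt_atTop 0] with n hn
    have hn' : (0 : ℝ) < n := by exact_mod_cast hn
    rw [if_pos (by omega), Nat.add_sub_cancel, mul_assoc, mul_assoc, ← Complex.ofReal_mul,
      ← Real.mul_rpow (by positivity) (by positivity), mul_div_cancel₀ _ hn'.ne']
    push_cast; rfl
  · refine Eventually.of_forall fun n k => ?_
    split_ifs with hk
    · obtain ⟨m, rfl⟩ := Nat.exists_eq_add_of_le hk
      rw [Nat.add_sub_cancel_left, norm_mul, norm_mul, Complex.norm_real, Real.norm_of_nonneg (by positivity)]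
      have a1 : ((k + m : ℕ) : ℝ) ^ ((3 : ℝ)/2) ≤ ((m : ℝ) + 1) ^ ((3 : ℝ)/2) * ((k : ℝ) + 1) ^ 2 := by
        calc _ ≤ (((m : ℝ) + 1) * ((k : ℝ) + 1)) ^ ((3 : ℝ)/2) := by
              gcongr
              push_cast
              nlinarith [mul_nonneg (Nat.cast_nonneg (α := ℝ) k) (Nat.cast_nonneg (α := ℝ) m)]
          _ = ((m : ℝ) + 1) ^ ((3 : ℝ)/2) * ((k : ℝ) + 1) ^ ((3 : ℝ)/2) :=
              Real.mul_rpow (by positivity) (by positivity)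
          _ ≤ ((m : ℝ) + 1) ^ ((3 : ℝ)/2) * ((k : ℝ) + 1) ^ (2 : ℝ) := by
              gcongr
              · linarith [Nat.cast_nonneg (α := ℝ) k]
              · norm_num
          _ = _ := by norm_num
      calc _ ≤ ‖e k‖ * ‖s m‖ * (((m : ℝ) + 1) ^ ((3 : ℝ)/2) * ((k : ℝ) + 1) ^ 2) := by gcongr
        _ = (‖s m‖ * ((m : ℝ) + 1) ^ ((3 : ℝ)/2)) * (‖e k‖ * ((k : ℝ) + 1) ^ 2) := by ring
        _ ≤ _ := by gcongr; exact hM m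
    · rw [norm_zero]; positivity

theorem exists_roots (ρ : ℝ) (h0 : 0 < ρ) (h1 : ρ < 1) (hr : ρ ^ 3 + ρ ^ 2 + 3 * ρ - 1 = 0) :
    ∃ α β : ℂ, ‖α‖ < 1 ∧ ‖β‖ < 1 ∧ α + β = -((ρ : ℂ) ^ 3 + (ρ : ℂ) ^ 2) ∧ α * β = (ρ : ℂ) ^ 3 := by
  set p : ℝ := -(ρ ^ 3 + ρ ^ 2) / 2 with hp
  have hq : 0 ≤ ρ ^ 3 - p ^ 2 := by
    have : ρ ^ 3 - p ^ 2 = ρ ^ 3 * (4 - ρ * (ρ + 1) ^ 2) / 4 := by rw [hp]; ring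
    rw [this]
    have : 0 ≤ 4 - ρ * (ρ + 1) ^ 2 := by nlinarith
    positivity
  set q := Real.sqrt (ρ ^ 3 - p ^ 2) with hq'
  have hqq : q ^ 2 = ρ ^ 3 - p ^ 2 := Real.sq_sqrt hq
  have hlt : ρ ^ 3 < 1 := pow_lt_one₀ h0.le h1 (by norm_num)
  have hn : ‖(⟨p, q⟩ : ℂ)‖ < 1 := by
    rw [← sq_lt_one_iff₀ (norm_nonneg _), Complex.sq_norm, Complex.normSq_mk]
    nlinarith
  refine ⟨⟨p, q⟩, ⟨p, -q⟩, hn, ?_, ?_, ?_⟩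
  · rw [← sq_lt_one_iff₀ (norm_nonneg _), Complex.sq_norm, Complex.normSq_mk]
    nlinarith
  · have : (⟨p, q⟩ : ℂ) + ⟨p, -q⟩ = ((2 * p : ℝ) : ℂ) := by
      apply Complex.ext <;> simp; ring
    rw [this, hp]; push_cast; ring
  · have : (⟨p, q⟩ : ℂ) * ⟨p, -q⟩ = ((p ^ 2 + q ^ 2 : ℝ) : ℂ) := by
      apply Complex.ext <;> simp [-Complex.ofReal_add, -Complex.ofReal_pow] <;> ring
    rw [this, hqq]; push_cast; ring

theorem WS.tendsto {f : ℂ⟦X⟧} (hf : WS f) :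
    Tendsto (fun n : ℕ => coeff n f * (((n : ℝ) ^ ((3 : ℝ)/2) : ℝ) : ℂ)) atTop (𝓝 0) := by
  refine squeeze_zero_norm (fun n => ?_) hf.tendsto_atTop_zero
  rw [norm_mul, Complex.norm_real, Real.norm_of_nonneg (by positivity)]
  gcongr
  calc (n : ℝ) ^ ((3 : ℝ)/2) ≤ ((n : ℝ) + 1) ^ ((3 : ℝ)/2) := by gcongr; linarith
    _ ≤ ((n : ℝ) + 1) ^ (2 : ℝ) := by
        gcongr
        · linarith [Nat.cast_nonneg (α := ℝ) n]
        · norm_num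
    _ = _ := by norm_num

theorem main_decomp (ρ : ℝ) (hr : ρ ^ 3 + ρ ^ 2 + 3 * ρ - 1 = 0) (α β : ℂ)
    (hs : α + β = -((ρ : ℂ) ^ 3 + (ρ : ℂ) ^ 2)) (hm : α * β = (ρ : ℂ) ^ 3) :
    ∃ σ : ℂ, ‖σ‖ = 1 ∧ 2 * rescale (ρ : ℂ) (mk (fun n => (H n : ℂ))) =
      2 * bs (-1) ρ - 1 + C σ * ((bs (1/2) α * bs (1/2) β * bs (-3/2) ρ) * bs (1/2) 1) := by
  have h := congrArg (rescale (ρ : ℂ)) H_ps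
  set h1 := rescale (ρ : ℂ) (mk (fun n => (H n : ℂ)))
  simp only [map_mul, map_sub, map_add, map_pow, map_one, map_ofNat, rescale_X] at h
  have hr' : (C (ρ : ℂ)) ^ 3 + (C (ρ : ℂ)) ^ 2 + 3 * C (ρ : ℂ) - 1 = (0 : ℂ⟦X⟧) := by
    have : (ρ : ℂ) ^ 3 + (ρ : ℂ) ^ 2 + 3 * ρ - 1 = 0 := by exact_mod_cast hr
    have := congrArg (C (R := ℂ)) this
    simpa [map_ofNat (C (R := ℂ)) 3] using this
  have hs' := congrArg (C (R := ℂ)) hs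
  have hm' := congrArg (C (R := ℂ)) hm
  simp only [map_add, map_mul, map_neg, map_pow] at hs' hm'
  have a1 := bs_half_sq α
  have a2 := bs_half_sq β
  have a3 := bs_half_sq 1
  have a4 := bs_inv ρ
  have a5 : bs (-1) ρ * (1 - C (ρ : ℂ) * X) = 1 := by
    rw [← bs_one, ← bs_add]; norm_num [bs]
  set R : ℂ⟦X⟧ := C (ρ : ℂ)
  set A := bs (1/2) α
  set B := bs (1/2) β
  set S := bs (1/2) 1
  set D := bs (-3/2) ρ
  set u := bs (-1) ρ
  rw [map_one, one_mul] at a3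
  have key : (1 - R * X) * ((1 + R * X - 2 * (1 - R * X) * h1) ^ 2 -
      (A * B * D * S * (1 - R * X)) ^ 2) = 0 := by
    have e1 : (1 - R * X) * (A * B * D * S * (1 - R * X)) ^ 2 = (1 - C α * X) * (1 - C β * X) * (1 - X) := by
      rw [← a1, ← a2, ← a3]
      linear_combination A ^ 2 * B ^ 2 * S ^ 2 * a4
    rw [mul_sub, e1, h]
    linear_combination (X - X ^ 2) * hs' + (X ^ 3 - X ^ 2) * hm' - X * hr'
  have y0 : (1 - R * X) ≠ 0 := right_ne_zero_of_mul (a5 ▸ one_ne_zero)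
  have key2 := (mul_eq_zero.1 key).resolve_left y0
  rcases sq_eq_sq_iff_eq_or_eq_neg.1 (sub_eq_zero.1 key2) with k | k
  · refine ⟨-1, by simp, ?_⟩
    rw [map_neg, map_one]
    linear_combination (-u) * k + (-1 - A * B * D * S - 2 * h1) * a5
  · refine ⟨1, by simp, ?_⟩
    rw [map_one]
    linear_combination (-u) * k + (-1 + A * B * D * S - 2 * h1) * a5

theorem H_asymptotics (ρ C : ℝ)
    (hρ_mem : ρ ∈ Set.Ioo (0 : ℝ) 1)
    (hρ_root : ρ ^ 3 + ρ ^ 2 + 3 * ρ - 1 = 0)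
    (hC : C = Real.sqrt (ρ * (3 * ρ ^ 2 + 2 * ρ + 3) / (1 - ρ)) / (4 * ρ * Real.sqrt Real.pi)) :
    Filter.Tendsto (fun n : ℕ => (H n : ℝ) * ρ ^ n * (n : ℝ) ^ ((3 : ℝ) / 2))
      Filter.atTop (nhds (C * ρ / (1 - ρ))) := by
  obtain ⟨h0, h1⟩ := hρ_mem
  obtain ⟨α, β, hα, hβ, hs, hm⟩ := exists_roots ρ h0 h1 hρ_root
  obtain ⟨σ, hσ, hdec⟩ := main_decomp ρ hρ_root α β hs hm
  have hρn : ‖(ρ : ℂ)‖ < 1 := by rw [Complex.norm_real, Real.norm_of_nonneg h0.le]; exact h1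
  have hA := bs_ws (r := 1/2) (by norm_num [abs_le]) hα
  have hB := bs_ws (r := 1/2) (by norm_num [abs_le]) hβ
  have hD := bs_ws (r := -3/2) (by norm_num [abs_le]) hρn
  have hU := bs_ws (r := -1) (by norm_num [abs_le]) hρn
  have hE := (hA.mul hB).mul hD
  set E := bs (1/2) α * bs (1/2) β * bs (-3/2) ρ with hEdef
  have hevE : ‖ev E‖ = Real.sqrt (ρ * (3 * ρ ^ 2 + 2 * ρ + 3) / (1 - ρ)) / (1 - ρ) := by
    have e1 : ev E ^ 2 * (1 - (ρ : ℂ)) ^ 3 = ((ρ * (3 * ρ ^ 2 + 2 * ρ + 3) : ℝ) : ℂ) := by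
      rw [hEdef, ev_mul (hA.mul hB) hD, ev_mul hA hB]
      have b1 := ev_half_sq hα
      have b2 := ev_half_sq hβ
      have b3 := ev_inv hρn
      have hr : (ρ : ℂ) ^ 3 + (ρ : ℂ) ^ 2 + 3 * ρ - 1 = 0 := by exact_mod_cast hρ_root
      push_cast
      calc _ = (ev (bs (1/2) α)) ^ 2 * (ev (bs (1/2) β)) ^ 2 * (ev (bs (-3/2) ρ) ^ 2 * (1 - (ρ : ℂ)) ^ 3) := by ring
        _ = _ := by
          rw [b1, b2, b3]
          linear_combination hm - hs - hr
    have h1' : 0 < 1 - ρ := by linarith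
    have e2 : ‖ev E‖ ^ 2 * (1 - ρ) ^ 3 = ρ * (3 * ρ ^ 2 + 2 * ρ + 3) := by
      have := congrArg norm e1
      rw [norm_mul, norm_pow, norm_pow, Complex.norm_real, Real.norm_of_nonneg (by positivity),
        ← Complex.ofReal_one, ← Complex.ofReal_sub, Complex.norm_real, Real.norm_of_nonneg h1'.le] at this
      exact this
    rw [← e2, eq_div_iff h1'.ne', show ‖ev E‖ ^ 2 * (1 - ρ) ^ 3 / (1 - ρ) = (‖ev E‖ * (1 - ρ)) ^ 2 by field_simp,
      Real.sqrt_sq (by positivity)]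
  have hS : Tendsto (fun n : ℕ => coeff n (bs (1/2) 1) * (((n : ℝ) ^ ((3 : ℝ)/2) : ℝ) : ℂ)) atTop
      (𝓝 ((-1 / (2 * Real.sqrt Real.pi) : ℝ) : ℂ)) := by
    have := (Complex.continuous_ofReal.tendsto _).comp half_asymp
    refine this.congr fun n => ?_
    simp [coeff_bs]
  have hconv := conv_asymp (fun n => coeff n (bs (1/2) 1)) (fun n => coeff n E) _ hS hE
  have hone : Tendsto (fun n : ℕ => coeff n (1 : ℂ⟦X⟧) * (((n : ℝ) ^ ((3 : ℝ)/2) : ℝ) : ℂ)) atTop (𝓝 0) := by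
    refine tendsto_const_nhds.congr' ?_
    filter_upwards [eventually_gt_atTop 0] with n hn
    simp [coeff_one, hn.ne']
  have htot := ((hU.tendsto.const_mul 2).sub hone).add (hconv.const_mul σ)
  have hfin := (htot.norm).div_const 2
  have hpi : 0 < Real.sqrt Real.pi := Real.sqrt_pos.2 Real.pi_pos
  have hval : ‖(2 : ℂ) * 0 - 0 + σ * ((∑' n, coeff n E) * ((-1 / (2 * Real.sqrt Real.pi) : ℝ) : ℂ))‖ / 2
      = C * ρ / (1 - ρ) := by
    have h1' : 0 < 1 - ρ := by linarith
    change ‖(2 : ℂ) * 0 - 0 + σ * (ev E * ((-1 / (2 * Real.sqrt Real.pi) : ℝ) : ℂ))‖ / 2 = _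
    rw [mul_zero, sub_zero, zero_add, norm_mul, norm_mul, hσ, hevE, Complex.norm_real, Real.norm_eq_abs,
      abs_div, abs_neg, abs_one, abs_of_pos (by positivity : 0 < 2 * Real.sqrt Real.pi), hC]
    field_simp
    norm_num
  rw [hval] at hfin
  refine hfin.congr fun n => ?_
  have hc := congrArg (coeff n) hdec
  rw [map_add, map_sub, coeff_C_mul, coeff_mul n E, show (2 : ℂ⟦X⟧) = PowerSeries.C (2 : ℂ) from (map_ofNat PowerSeries.C 2).symm, coeff_C_mul,
    coeff_C_mul, coeff_rescale, coeff_mk] at hc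
  have : (2 : ℂ) * (coeff n (bs (-1) ρ) * (((n : ℝ) ^ ((3 : ℝ)/2) : ℝ) : ℂ)) - coeff n (1 : ℂ⟦X⟧) * (((n : ℝ) ^ ((3 : ℝ)/2) : ℝ) : ℂ)
      + σ * ((∑ p ∈ Finset.HasAntidiagonal.antidiagonal n, coeff p.1 E * coeff p.2 (bs (1/2) 1)) * (((n : ℝ) ^ ((3 : ℝ)/2) : ℝ) : ℂ))
      = ((2 * ((H n : ℝ) * ρ ^ n * (n : ℝ) ^ ((3 : ℝ)/2)) : ℝ) : ℂ) := by
    rw [Complex.ofReal_mul, Complex.ofReal_mul _ ((n : ℝ) ^ ((3 : ℝ)/2))]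
    push_cast
    linear_combination (-(((n : ℝ) ^ ((3 : ℝ)/2) : ℝ) : ℂ)) * hc
  rw [this, Complex.norm_real, Real.norm_of_nonneg (by positivity)]
  ring
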